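/- arXiv:1601.06551 — 2 statements merged into one kernel-verified Lean document; each statement's English description precedes it below -/
import Mathlib

section
/- Let Θ=×_{e∈E}[l_e,r_e] be a parameter space with minimum vector θ⁻ and maximum vector θ⁺, and let 1 ≤ k ≤ |V|. Then the best achievable robust ratio is at least the ratio of the extreme optimal spreads: max_{S⊆V, |S|=k} g(Θ,S) ≥ OPT_{θ⁻}/OPT_{θ⁺}, and moreover OPT_{θ⁻}/OPT_{θ⁺} ≥ min_{∅≠S⊆V} σ_{θ⁻}(S)/σ_{θ⁺}(S). -/
/-!
The influence spread is monotone in the edge probabilities: it is the expectation of the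
increasing function `L ↦ |R_L(S)|` of a random set `L` containing each edge `e` independently with
probability `θ e`, and conditioning on one edge at a time shows that raising a `θ e` can only
raise such an expectation (`spread_mono`). Hence `OPT` is monotone too.

If `S` is optimal for `θ⁻`, then for every `θ` in the box
`σ_θ(S) / OPT_θ ≥ σ_{θ⁻}(S) / OPT_{θ⁺} = OPT_{θ⁻} / OPT_{θ⁺}`, so this `S` witnesses the first
claim. If instead `S` is optimal for `θ⁺`, then
`OPT_{θ⁻} / OPT_{θ⁺} ≥ σ_{θ⁻}(S) / σ_{θ⁺}(S)`, and `S` is nonempty because `1 ≤ k`; this is the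
second claim. All denominators are positive since `σ_θ(S) ≥ |S|`.
-/

noncomputable def reachSet {V : Type*} [Fintype V] [DecidableEq V]
    (L : Finset (V × V)) (S : Finset V) : Finset V :=
  @Finset.filter V
    (fun v => ∃ s ∈ S, Relation.ReflTransGen (fun a b : V => (a, b) ∈ L) s v)
    (fun _ => Classical.propDecidable _) Finset.univ

noncomputable def liveProb {V : Type*} [DecidableEq V]
    (E : Finset (V × V)) (θ : V × V → ℝ) (L : Finset (V × V)) : ℝ :=
  (∏ e ∈ L, θ e) * ∏ e ∈ E \ L, (1 - θ e)

noncomputable def spread {V : Type*} [Fintype V] [DecidableEq V]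
    (E : Finset (V × V)) (θ : V × V → ℝ) (S : Finset V) : ℝ :=
  ∑ L ∈ E.powerset, liveProb E θ L * (reachSet L S).card

noncomputable def OPT {V : Type*} [Fintype V] [DecidableEq V]
    (E : Finset (V × V)) (θ : V × V → ℝ) (k : ℕ) : ℝ :=
  sSup {x : ℝ | ∃ T : Finset V, T.card = k ∧ x = spread E θ T}

noncomputable def robustRatio {V : Type*} [Fintype V] [DecidableEq V]
    (E : Finset (V × V)) (l r : V × V → ℝ) (k : ℕ) (S : Finset V) : ℝ :=
  sInf {x : ℝ | ∃ θ : V × V → ℝ, (∀ e ∈ E, l e ≤ θ e ∧ θ e ≤ r e) ∧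
    x = spread E θ S / OPT E θ k}

/-- Expectation of `f L` when `L ⊆ E` is the random live-edge set with parameters `θ`. -/
noncomputable def liveExp {V : Type*} [DecidableEq V]
    (E : Finset (V × V)) (θ : V × V → ℝ) (f : Finset (V × V) → ℝ) : ℝ :=
  ∑ L ∈ E.powerset, liveProb E θ L * f L

/-- Conditioning on whether the edge `e` is live. -/
lemma liveExp_insert {V : Type*} [DecidableEq V]
    (E : Finset (V × V)) (e : V × V) (he : e ∉ E) (θ : V × V → ℝ) (f : Finset (V × V) → ℝ) :
    liveExp (insert e E) θ f =
      (1 - θ e) * liveExp E θ f + θ e * liveExp E θ (fun L => f (insert e L)) := by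
  unfold liveExp
  rw [Finset.sum_powerset_insert he, Finset.mul_sum, Finset.mul_sum]
  congr 1
  · refine Finset.sum_congr rfl fun L hL => ?_
    have heL : e ∉ L := fun h => he (Finset.mem_powerset.1 hL h)
    have h : insert e E \ L = insert e (E \ L) := Finset.insert_sdiff_of_notMem _ heL
    have h' : e ∉ E \ L := fun h => he (Finset.mem_sdiff.1 h).1
    rw [liveProb, liveProb, h, Finset.prod_insert h']
    ring
  · refine Finset.sum_congr rfl fun L hL => ?_
    have heL : e ∉ L := fun h => he (Finset.mem_powerset.1 hL h)
    have h : insert e E \ insert e L = E \ L := by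
      ext x
      simp only [Finset.mem_sdiff, Finset.mem_insert]
      grind
    rw [liveProb, liveProb, h, Finset.prod_insert heL]
    ring

lemma liveExp_const {V : Type*} [DecidableEq V]
    (E : Finset (V × V)) (θ : V × V → ℝ) (c : ℝ) : liveExp E θ (fun _ => c) = c := by
  induction E using Finset.induction_on with
  | empty => simp [liveExp, liveProb]
  | insert e E he ih => rw [liveExp_insert E e he, ih]; ring

lemma liveExp_le_liveExp {V : Type*} [DecidableEq V]
    (E : Finset (V × V)) (θ : V × V → ℝ) (hθ : ∀ e ∈ E, 0 ≤ θ e ∧ θ e ≤ 1)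
    (f g : Finset (V × V) → ℝ) (hfg : ∀ L, f L ≤ g L) : liveExp E θ f ≤ liveExp E θ g := by
  refine Finset.sum_le_sum fun L hL => mul_le_mul_of_nonneg_left (hfg L) ?_
  refine mul_nonneg (Finset.prod_nonneg fun e he => (hθ e (Finset.mem_powerset.1 hL he)).1)
    (Finset.prod_nonneg fun e he => ?_)
  linarith [(hθ e (Finset.mem_sdiff.1 he).1).2]

lemma liveExp_mono {V : Type*} [DecidableEq V]
    (E : Finset (V × V)) (θ θ' : V × V → ℝ) (h : ∀ e ∈ E, 0 ≤ θ e ∧ θ e ≤ θ' e ∧ θ' e ≤ 1)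
    (f : Finset (V × V) → ℝ) (hf : Monotone f) : liveExp E θ f ≤ liveExp E θ' f := by
  induction E using Finset.induction_on generalizing f with
  | empty => simp [liveExp, liveProb]
  | insert e E he ih =>
    have hE : ∀ e ∈ E, 0 ≤ θ e ∧ θ e ≤ θ' e ∧ θ' e ≤ 1 :=
      fun x hx => h x (Finset.mem_insert_of_mem hx)
    obtain ⟨h0, h1, h2⟩ := h e (Finset.mem_insert_self e E)
    rw [liveExp_insert E e he, liveExp_insert E e he]
    have hA := ih hE f hf
    have hB := ih hE (fun L => f (insert e L))
      (fun L M hLM => hf (Finset.insert_subset_insert e hLM))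
    have hAB : liveExp E θ f ≤ liveExp E θ (fun L => f (insert e L)) :=
      liveExp_le_liveExp E θ (fun x hx => ⟨(hE x hx).1, (hE x hx).2.1.trans (hE x hx).2.2⟩) _ _
        fun L => hf (Finset.subset_insert e L)
    -- Raise `θ e` first (the conditional expectations satisfy `hAB`), then the other parameters.
    nlinarith [mul_nonneg (sub_nonneg.2 h1) (sub_nonneg.2 hAB),
      mul_nonneg (sub_nonneg.2 h2) (sub_nonneg.2 hA),
      mul_nonneg (h0.trans h1) (sub_nonneg.2 hB)]

lemma reachSet_mono {V : Type*} [Fintype V] [DecidableEq V]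
    (S : Finset V) : Monotone fun L : Finset (V × V) => reachSet L S := by
  intro L M hLM v hv
  simp only [reachSet, Finset.mem_filter, Finset.mem_univ, true_and] at hv ⊢
  obtain ⟨s, hs, hsv⟩ := hv
  exact ⟨s, hs, Relation.ReflTransGen.mono (fun _ _ hab => hLM hab) _ _ hsv⟩

lemma subset_reachSet {V : Type*} [Fintype V] [DecidableEq V]
    (L : Finset (V × V)) (S : Finset V) : S ⊆ reachSet L S := by
  intro v hv
  simp only [reachSet, Finset.mem_filter, Finset.mem_univ, true_and]
  exact ⟨v, hv, .refl⟩

lemma spread_mono {V : Type*} [Fintype V] [DecidableEq V]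
    (E : Finset (V × V)) (θ θ' : V × V → ℝ) (h : ∀ e ∈ E, 0 ≤ θ e ∧ θ e ≤ θ' e ∧ θ' e ≤ 1)
    (S : Finset V) : spread E θ S ≤ spread E θ' S :=
  liveExp_mono E θ θ' h (fun L => ((reachSet L S).card : ℝ)) fun _ _ hLM =>
    Nat.cast_le.2 (Finset.card_le_card (reachSet_mono S hLM))

lemma card_le_spread {V : Type*} [Fintype V] [DecidableEq V]
    (E : Finset (V × V)) (θ : V × V → ℝ) (hθ : ∀ e ∈ E, 0 ≤ θ e ∧ θ e ≤ 1)
    (S : Finset V) : (S.card : ℝ) ≤ spread E θ S := by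
  rw [← liveExp_const E θ S.card]
  exact liveExp_le_liveExp E θ hθ _ (fun L => ((reachSet L S).card : ℝ)) fun L =>
    Nat.cast_le.2 (Finset.card_le_card (subset_reachSet L S))

lemma spread_le_OPT {V : Type*} [Fintype V] [DecidableEq V]
    (E : Finset (V × V)) (θ : V × V → ℝ) (S : Finset V) :
    spread E θ S ≤ OPT E θ S.card := by
  refine le_csSup (Set.Finite.bddAbove ?_) ⟨S, rfl, rfl⟩
  refine (Set.finite_range (spread E θ)).subset ?_
  rintro x ⟨T, -, rfl⟩
  exact ⟨T, rfl⟩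

lemma exists_spread_eq_OPT {V : Type*} [Fintype V] [DecidableEq V]
    (E : Finset (V × V)) (θ : V × V → ℝ) (k : ℕ) (hkn : k ≤ Fintype.card V) :
    ∃ S : Finset V, S.card = k ∧ OPT E θ k = spread E θ S := by
  have hfin : {x : ℝ | ∃ T : Finset V, T.card = k ∧ x = spread E θ T}.Finite := by
    refine (Set.finite_range (spread E θ)).subset ?_
    rintro x ⟨T, -, rfl⟩
    exact ⟨T, rfl⟩
  obtain ⟨T, -, hT⟩ := Finset.exists_subset_card_eq (s := (Finset.univ : Finset V)) hkn
  have hne : {x : ℝ | ∃ T : Finset V, T.card = k ∧ x = spread E θ T}.Nonempty :=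
    ⟨_, T, hT, rfl⟩
  exact hne.csSup_mem hfin

lemma OPT_mono {V : Type*} [Fintype V] [DecidableEq V]
    (E : Finset (V × V)) (θ θ' : V × V → ℝ) (h : ∀ e ∈ E, 0 ≤ θ e ∧ θ e ≤ θ' e ∧ θ' e ≤ 1)
    (k : ℕ) (hkn : k ≤ Fintype.card V) : OPT E θ k ≤ OPT E θ' k := by
  obtain ⟨S, rfl, hS⟩ := exists_spread_eq_OPT E θ k hkn
  rw [hS]
  exact (spread_mono E θ θ' h S).trans (spread_le_OPT E θ' S)

lemma OPT_pos {V : Type*} [Fintype V] [DecidableEq V]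
    (E : Finset (V × V)) (θ : V × V → ℝ) (hθ : ∀ e ∈ E, 0 ≤ θ e ∧ θ e ≤ 1)
    (k : ℕ) (hk : 1 ≤ k) (hkn : k ≤ Fintype.card V) : 0 < OPT E θ k := by
  obtain ⟨S, rfl, hS⟩ := exists_spread_eq_OPT E θ k hkn
  rw [hS]
  exact (Nat.cast_pos.2 hk).trans_le (card_le_spread E θ hθ S)

/-- the best achievable robust ratio over size-`k` sets is at least
`OPT_{θ⁻}/OPT_{θ⁺}`, and `OPT_{θ⁻}/OPT_{θ⁺} ≥ min_{∅≠S⊆V} σ_{θ⁻}(S)/σ_{θ⁺}(S)`. -/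
theorem best_robust_ratio_ge_opt_ratio {V : Type*} [Fintype V] [DecidableEq V]
    (E : Finset (V × V)) (l r : V × V → ℝ)
    (hlr : ∀ e ∈ E, 0 ≤ l e ∧ l e ≤ r e ∧ r e ≤ 1)
    (k : ℕ) (hk : 1 ≤ k) (hkn : k ≤ Fintype.card V) :
    (∃ S : Finset V, S.card = k ∧ OPT E l k / OPT E r k ≤ robustRatio E l r k S) ∧
    sInf {x : ℝ | ∃ S : Finset V, S.Nonempty ∧ x = spread E l S / spread E r S} ≤
      OPT E l k / OPT E r k := by
  have hl : ∀ e ∈ E, 0 ≤ l e ∧ l e ≤ 1 :=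
    fun e he => ⟨(hlr e he).1, (hlr e he).2.1.trans (hlr e he).2.2⟩
  have hr : ∀ e ∈ E, 0 ≤ r e ∧ r e ≤ 1 :=
    fun e he => ⟨(hlr e he).1.trans (hlr e he).2.1, (hlr e he).2.2⟩
  constructor
  · obtain ⟨S, hSk, hS⟩ := exists_spread_eq_OPT E l k hkn
    refine ⟨S, hSk, le_csInf ⟨_, l, fun e he => ⟨le_rfl, (hlr e he).2.1⟩, rfl⟩ ?_⟩
    rintro x ⟨θ, hθ, rfl⟩
    have hlθ : ∀ e ∈ E, 0 ≤ l e ∧ l e ≤ θ e ∧ θ e ≤ 1 :=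
      fun e he => ⟨(hlr e he).1, (hθ e he).1, (hθ e he).2.trans (hlr e he).2.2⟩
    have hθr : ∀ e ∈ E, 0 ≤ θ e ∧ θ e ≤ r e ∧ r e ≤ 1 :=
      fun e he => ⟨(hlr e he).1.trans (hθ e he).1, (hθ e he).2, (hlr e he).2.2⟩
    have hlS : spread E l S ≤ spread E θ S := spread_mono E l θ hlθ S
    have h0 : 0 ≤ spread E l S := (Nat.cast_nonneg _).trans (card_le_spread E l hl S)
    rw [hS]
    exact div_le_div₀ (h0.trans hlS) hlS
      (OPT_pos E θ (fun e he => ⟨(hθr e he).1, (hlθ e he).2.2⟩) k hk hkn)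
      (OPT_mono E θ r hθr k hkn)
  · obtain ⟨S, rfl, hS⟩ := exists_spread_eq_OPT E r k hkn
    refine le_trans (b := spread E l S / spread E r S)
      (csInf_le ⟨0, ?_⟩ ⟨S, Finset.card_pos.1 hk, rfl⟩) ?_
    · rintro x ⟨T, -, rfl⟩
      exact div_nonneg ((Nat.cast_nonneg _).trans (card_le_spread E l hl T))
        ((Nat.cast_nonneg _).trans (card_le_spread E r hr T))
    · rw [hS]
      exact div_le_div_of_nonneg_right (spread_le_OPT E l S)
        ((Nat.cast_nonneg _).trans (card_le_spread E r hr S))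
end

section
/- (Deterministic core of Theorem 6, setting 2.) Let Θ=×_{e∈E}[l_e,r_e] be a parameter space with minimum vector θ⁻ and maximum vector θ⁺, let 0 < ε < 1, and suppose r_e ≤ (1 + (1/n)·ln(1/(1−ε)))·l_e for every edge e ∈ E, where n=|V|. Then every nonempty seed set S ⊆ V satisfies σ_{θ⁻}(S) ≥ (1−ε)·σ_{θ⁺}(S). -/
theorem mem_reachSet {V : Type*} [Fintype V] [DecidableEq V]
    {L : Finset (V × V)} {S : Finset V} {v : V} :
    v ∈ reachSet L S ↔ ∃ s ∈ S, Relation.ReflTransGen (fun a b : V => (a, b) ∈ L) s v := by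
  simp [reachSet]

/-- Conditioning on the state of one additional edge. -/
theorem sum_liveProb_insert {V : Type*} [DecidableEq V] (E : Finset (V × V))
    (θ : V × V → ℝ) (e : V × V) (he : e ∉ E) (f : Finset (V × V) → ℝ) :
    ∑ L ∈ (insert e E).powerset, liveProb (insert e E) θ L * f L =
      (1 - θ e) * ∑ L ∈ E.powerset, liveProb E θ L * f L +
      θ e * ∑ L ∈ E.powerset, liveProb E θ L * f (insert e L) := by
  rw [Finset.sum_powerset_insert he, Finset.mul_sum, Finset.mul_sum]
  congr 1 <;> refine Finset.sum_congr rfl fun L hL => ?_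
  · have heL : e ∉ L := fun h => he (Finset.mem_powerset.1 hL h)
    rw [liveProb, liveProb, Finset.insert_sdiff_of_notMem _ heL,
      Finset.prod_insert (by simp [he])]
    ring
  · have heL : e ∉ L := fun h => he (Finset.mem_powerset.1 hL h)
    rw [liveProb, liveProb, Finset.prod_insert heL, Finset.insert_sdiff_insert,
      Finset.sdiff_insert_of_notMem he]
    ring

/-- Thinning: sampling with probabilities `r e * q e` is the same as sampling with probabilities
`r e` and then keeping each live edge with probability `q e`. -/
theorem sum_liveProb_mul {V : Type*} [DecidableEq V] (E : Finset (V × V))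
    (r q : V × V → ℝ) (f : Finset (V × V) → ℝ) :
    ∑ L ∈ E.powerset, liveProb E (fun e => r e * q e) L * f L =
      ∑ L ∈ E.powerset, liveProb E r L * ∑ A ∈ L.powerset, liveProb L q A * f A := by
  induction E using Finset.induction_on generalizing f with
  | empty => simp [liveProb]
  | insert e E he ih =>
    rw [sum_liveProb_insert E _ e he, sum_liveProb_insert E r e he, ih, ih]
    have h : ∑ L ∈ E.powerset, liveProb E r L *
        ∑ A ∈ (insert e L).powerset, liveProb (insert e L) q A * f A =
        (1 - q e) * ∑ L ∈ E.powerset, liveProb E r L * ∑ A ∈ L.powerset, liveProb L q A * f A +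
        q e * ∑ L ∈ E.powerset, liveProb E r L *
          ∑ A ∈ L.powerset, liveProb L q A * f (insert e A) := by
      rw [Finset.mul_sum, Finset.mul_sum, ← Finset.sum_add_distrib]
      refine Finset.sum_congr rfl fun L hL => ?_
      rw [sum_liveProb_insert L q e fun h => he (Finset.mem_powerset.1 hL h)]
      ring
    rw [h]
    ring

theorem liveProb_nonneg {V : Type*} [DecidableEq V] {E : Finset (V × V)} {θ : V × V → ℝ}
    (h : ∀ e ∈ E, 0 ≤ θ e ∧ θ e ≤ 1) {L : Finset (V × V)} (hL : L ⊆ E) :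
    0 ≤ liveProb E θ L :=
  mul_nonneg (Finset.prod_nonneg fun e he => (h e (hL he)).1)
    (Finset.prod_nonneg fun e he => sub_nonneg.2 (h e (Finset.sdiff_subset he)).2)

/-- The edges of `P` are simultaneously live with probability `∏ e ∈ P, q e`, which bounds from
below the expectation of any nonnegative `f` that is at least `1` whenever `P` is live. -/
theorem prod_le_sum_liveProb {V : Type*} [DecidableEq V] {L P : Finset (V × V)} (hP : P ⊆ L)
    {q : V × V → ℝ} (hq : ∀ e ∈ L, 0 ≤ q e ∧ q e ≤ 1) {f : Finset (V × V) → ℝ}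
    (hf0 : ∀ A, 0 ≤ f A) (hf1 : ∀ A, P ⊆ A → 1 ≤ f A) :
    ∏ e ∈ P, q e ≤ ∑ A ∈ L.powerset, liveProb L q A * f A := by
  -- Expand `∏ e ∈ L, (q e + (1 - q e) * [e ∉ P])` over subsets of `L`:
  -- the terms with `P ⊄ A` vanish.
  have h : ∏ e ∈ P, q e = ∏ e ∈ L, (q e + if e ∈ P then 0 else 1 - q e) := by
    rw [← Finset.prod_subset hP (f := fun e => q e + if e ∈ P then 0 else 1 - q e)]
    · exact Finset.prod_congr rfl fun e he => by simp [he]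
    · intro e _ he
      simp [he]
  rw [h, Finset.prod_add]
  refine Finset.sum_le_sum fun A hA => ?_
  have hA := Finset.mem_powerset.1 hA
  have h0 := liveProb_nonneg hq hA
  by_cases hPA : P ⊆ A
  · have : ∏ e ∈ L \ A, (if e ∈ P then 0 else 1 - q e) = ∏ e ∈ L \ A, (1 - q e) :=
      Finset.prod_congr rfl fun e he =>
        if_neg fun heP => (Finset.mem_sdiff.1 he).2 (hPA heP)
    rw [this]
    exact le_mul_of_one_le_right h0 (hf1 A hPA)
  · obtain ⟨e, heP, heA⟩ := Finset.not_subset.1 hPA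
    rw [Finset.prod_eq_zero (Finset.mem_sdiff.2 ⟨hP heP, heA⟩) (by simp [heP]), mul_zero]
    exact mul_nonneg h0 (hf0 A)

/-- A node reachable in `L` is reachable using fewer than `|V|` edges of `L`. The proof takes a
largest node set spanned from `s` by a tree with edges in `L`; no edge of `L` can leave it. -/
theorem exists_small_reach {V : Type*} [Fintype V] [DecidableEq V]
    {L : Finset (V × V)} {s v : V}
    (h : Relation.ReflTransGen (fun a b : V => (a, b) ∈ L) s v) :
    ∃ P ⊆ L, P.card < Fintype.card V ∧
      Relation.ReflTransGen (fun a b : V => (a, b) ∈ P) s v := by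
  classical
  let Q : Finset V → Prop := fun W => s ∈ W ∧ ∃ P ⊆ L, P.card < W.card ∧
    ∀ w ∈ W, Relation.ReflTransGen (fun a b : V => (a, b) ∈ P) s w
  have hs : Q {s} := ⟨by simp, ∅, by simp, by simp, fun w hw => by
    rw [Finset.mem_singleton.1 hw]⟩
  obtain ⟨W, hW, hmax⟩ := Finset.exists_max_image (Finset.univ.filter Q) Finset.card
    ⟨{s}, by simpa using hs⟩
  obtain ⟨hsW, P, hPL, hPc, hPr⟩ : Q W := by simpa using hW
  have hv : v ∈ W := by
    induction h with
    | refl => exact hsW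
    | @tail b c _ hbc hb =>
      by_contra hc
      have hQ : Q (insert c W) := by
        refine ⟨Finset.mem_insert_of_mem hsW, insert (b, c) P,
          Finset.insert_subset hbc hPL, ?_, ?_⟩
        · rw [Finset.card_insert_of_notMem hc]
          exact (Finset.card_insert_le _ _).trans_lt (by omega)
        · have hmono : ∀ w ∈ W,
              Relation.ReflTransGen (fun x y : V => (x, y) ∈ insert (b, c) P) s w :=
            fun w hw =>
              Relation.ReflTransGen.mono (fun _ _ hxy => Finset.mem_insert_of_mem hxy) _ _ (hPr w hw)
          intro w hw
          rcases Finset.mem_insert.1 hw with rfl | hw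
          · exact (hmono b hb).tail (Finset.mem_insert_self _ _)
          · exact hmono w hw
      have := hmax (insert c W) (by simpa using hQ)
      rw [Finset.card_insert_of_notMem hc] at this
      omega
  exact ⟨P, hPL, hPc.trans_le (Finset.card_le_univ W), hPr v hv⟩

/-- If every set of fewer than `|V|` edges of `L` survives thinning by `q` with probability at least
`δ`, then the expected reach after thinning is at least `δ` times the reach in `L`. -/
theorem mul_card_le_sum_liveProb {V : Type*} [Fintype V] [DecidableEq V]
    {L : Finset (V × V)} {S : Finset V} {q : V × V → ℝ} {δ : ℝ}
    (hq : ∀ e ∈ L, 0 ≤ q e ∧ q e ≤ 1)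
    (hδ : ∀ P ⊆ L, P.card < Fintype.card V → δ ≤ ∏ e ∈ P, q e) :
    δ * (reachSet L S).card ≤ ∑ A ∈ L.powerset, liveProb L q A * (reachSet A S).card := by
  calc δ * (reachSet L S).card
      = ∑ v ∈ reachSet L S, δ := by simp [mul_comm]
    _ ≤ ∑ v ∈ reachSet L S, ∑ A ∈ L.powerset,
          liveProb L q A * (if v ∈ reachSet A S then 1 else 0) := by
        refine Finset.sum_le_sum fun v hv => ?_
        obtain ⟨s, hs, hsv⟩ := mem_reachSet.1 hv
        obtain ⟨P, hPL, hPc, hP⟩ := exists_small_reach hsv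
        refine (hδ P hPL hPc).trans (prod_le_sum_liveProb hPL hq (fun A => ?_) fun A hA => ?_)
        · split_ifs <;> norm_num
        · rw [if_pos (mem_reachSet.2 ⟨s, hs, Relation.ReflTransGen.mono (fun _ _ h => hA h) _ _ hP⟩)]
    _ = ∑ A ∈ L.powerset, liveProb L q A *
          ∑ v ∈ reachSet L S, (if v ∈ reachSet A S then 1 else 0) := by
        rw [Finset.sum_comm]
        simp only [Finset.mul_sum]
    _ ≤ _ := by
        refine Finset.sum_le_sum fun A hA => mul_le_mul_of_nonneg_left ?_
          (liveProb_nonneg hq (Finset.mem_powerset.1 hA))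
        rw [Finset.sum_boole]
        exact_mod_cast Finset.card_le_card fun v hv => (Finset.mem_filter.1 hv).2

/-- The survival bound `(1 + (1/n) log (1/(1-ε))) ^ n ≤ 1/(1-ε)`, in product form. -/
theorem one_sub_mul_pow_le {n : ℕ} (hn : n ≠ 0) {ε : ℝ} (hε0 : 0 < ε) (hε1 : ε < 1) :
    (1 - ε) * (1 + (1 / (n : ℝ)) * Real.log (1 / (1 - ε))) ^ n ≤ 1 := by
  have h1 : 0 < 1 - ε := by linarith
  have hlog : 0 ≤ Real.log (1 / (1 - ε)) :=
    Real.log_nonneg (by rw [le_div_iff₀ h1]; linarith)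
  have hn' : (n : ℝ) ≠ 0 := Nat.cast_ne_zero.2 hn
  have h : (1 + (1 / (n : ℝ)) * Real.log (1 / (1 - ε))) ^ n ≤ 1 / (1 - ε) := by
    calc _ ≤ Real.exp ((1 / (n : ℝ)) * Real.log (1 / (1 - ε))) ^ n := by
          refine pow_le_pow_left₀ (by positivity) ?_ n
          rw [add_comm]
          exact Real.add_one_le_exp _
      _ = Real.exp (Real.log (1 / (1 - ε))) := by
          rw [← Real.exp_nat_mul]
          congr 1
          field_simp
      _ = 1 / (1 - ε) := Real.exp_log (by positivity)
  calc _ ≤ (1 - ε) * (1 / (1 - ε)) := mul_le_mul_of_nonneg_left h h1.le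
    _ = 1 := by field_simp

/-- deterministic core of Theorem 6, setting 2: if
`r e ≤ (1 + (1/n)·ln(1/(1−ε)))·l e` for every edge, then every nonempty seed set `S`
satisfies `σ_{θ⁻}(S) ≥ (1−ε)·σ_{θ⁺}(S)`. -/
theorem multiplicative_width_spread_ratio {V : Type*} [Fintype V] [DecidableEq V]
    (E : Finset (V × V)) (n : ℕ) (hn : n = Fintype.card V)
    (l r : V × V → ℝ)
    (hlr : ∀ e ∈ E, 0 ≤ l e ∧ l e ≤ r e ∧ r e ≤ 1)
    (ε : ℝ) (hε0 : 0 < ε) (hε1 : ε < 1)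
    (hmul : ∀ e ∈ E, r e ≤ (1 + (1 / (n : ℝ)) * Real.log (1 / (1 - ε))) * l e)
    (S : Finset V) (hS : S.Nonempty) :
    (1 - ε) * spread E r S ≤ spread E l S := by
  have hn0 : n ≠ 0 := by
    obtain ⟨s, _⟩ := hS
    rw [hn]
    exact (Fintype.card_pos_iff.2 ⟨s⟩).ne'
  have h1 : 0 < 1 - ε := by linarith
  have hpow := one_sub_mul_pow_le hn0 hε0 hε1
  have hc1 : 1 ≤ 1 + (1 / (n : ℝ)) * Real.log (1 / (1 - ε)) := by
    have := Real.log_nonneg (x := 1 / (1 - ε)) (by rw [le_div_iff₀ h1]; linarith)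
    have : 0 ≤ (1 / (n : ℝ)) * Real.log (1 / (1 - ε)) := by positivity
    linarith
  set c := 1 + (1 / (n : ℝ)) * Real.log (1 / (1 - ε)) with hc
  have hc0 : 0 < c := by linarith
  -- Retention probabilities; if `r e = 0` then `l e = 0` and any value in `[c⁻¹, 1]` works.
  obtain ⟨q, hq⟩ : ∃ q : V × V → ℝ, ∀ e ∈ E, r e * q e = l e ∧ c⁻¹ ≤ q e ∧ q e ≤ 1 := by
    refine ⟨fun e => if r e = 0 then 1 else l e / r e, fun e he => ?_⟩
    obtain ⟨hl, hle, -⟩ := hlr e he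
    have hm := hmul e he
    by_cases hr : r e = 0
    · simp only [hr, if_true]
      exact ⟨by linarith, inv_le_one_of_one_le₀ hc1, le_rfl⟩
    · have hr0 : 0 < r e := lt_of_le_of_ne (hl.trans hle) (Ne.symm hr)
      simp only [hr, if_false]
      refine ⟨by field_simp, ?_, (div_le_one hr0).2 hle⟩
      rw [le_div_iff₀ hr0, inv_mul_le_iff₀ hc0]
      exact hm
  have hq01 : ∀ e ∈ E, 0 ≤ q e ∧ q e ≤ 1 := fun e he =>
    ⟨(inv_nonneg.2 hc0.le).trans (hq e he).2.1, (hq e he).2.2⟩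
  have hδ : ∀ P ⊆ E, P.card < Fintype.card V → 1 - ε ≤ ∏ e ∈ P, q e := by
    intro P hP hcard
    calc 1 - ε ≤ (c⁻¹) ^ n := by
          rw [inv_pow, ← one_div, le_div_iff₀ (by positivity)]
          exact hpow
      _ ≤ (c⁻¹) ^ P.card :=
          pow_le_pow_of_le_one (inv_nonneg.2 hc0.le) (inv_le_one_of_one_le₀ hc1) (by omega)
      _ = ∏ _e ∈ P, c⁻¹ := by simp
      _ ≤ ∏ e ∈ P, q e := Finset.prod_le_prod (fun _ _ => inv_nonneg.2 hc0.le)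
          fun e he => (hq e (hP he)).2.1
  have hl : spread E l S = spread E (fun e => r e * q e) S := by
    refine Finset.sum_congr rfl fun L hL => ?_
    have hL := Finset.mem_powerset.1 hL
    have h₁ : ∏ e ∈ L, l e = ∏ e ∈ L, (r e * q e) :=
      Finset.prod_congr rfl fun e he => (hq e (hL he)).1.symm
    have h₂ : ∏ e ∈ E \ L, (1 - l e) = ∏ e ∈ E \ L, (1 - r e * q e) :=
      Finset.prod_congr rfl fun e he => by rw [(hq e (Finset.sdiff_subset he)).1]
    rw [liveProb, liveProb, h₁, h₂]
  rw [hl, spread, spread, sum_liveProb_mul E r q fun L => ((reachSet L S).card : ℝ),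
    Finset.mul_sum]
  refine Finset.sum_le_sum fun L hL => ?_
  have hL := Finset.mem_powerset.1 hL
  rw [mul_left_comm]
  exact mul_le_mul_of_nonneg_left
    (mul_card_le_sum_liveProb (fun e he => hq01 e (hL he)) fun P hP => hδ P (hP.trans hL))
    (liveProb_nonneg (fun e he => ⟨(hlr e he).1.trans (hlr e he).2.1, (hlr e he).2.2⟩) hL)
end
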